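/- Let Ω ⊂ ℝⁿ be open and let φ₁, φ₂, φ₃ ∈ Φ_c(Ω) satisfy φ₁⁻¹(x,t)·φ₂⁻¹(x,t) ≤ φ₃⁻¹(x,t) for all t ≥ 0 and almost every x ∈ Ω. Then the Young-type inequality φ₃(x,st) ≤ max{φ₁(x,s), φ₂(x,t)} ≤ φ₁(x,s) + φ₂(x,t) holds for all s,t > 0 and almost every x ∈ Ω. -/

import Mathlib

open MeasureTheory NNReal ENNReal Filter Set

noncomputable section

/-- `ℝⁿ` with the Euclidean structure. -/
abbrev RSp (n : ℕ) := EuclideanSpace ℝ (Fin n)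

variable {n : ℕ}

/-- A cube in `ℝⁿ` with sides parallel to the coordinate axes,
with center `c` and side length `2r`. -/
structure Cube (n : ℕ) where
  c : RSp n
  r : ℝ
  r_pos : 0 < r

/-- The underlying set of a cube. -/
def Cube.set (Q : Cube n) : Set (RSp n) := {y | ∀ i, |y i - Q.c i| ≤ Q.r}

/-- A weak Φ-function on `Ω` (the class `Φ_w(Ω)`). -/
structure IsWeakPhi (Ω : Set (RSp n)) (φ : RSp n → ℝ≥0 → ℝ≥0∞) : Prop where
  meas : ∀ f : RSp n → ℝ≥0, Measurable f →
    AEMeasurable (fun x => φ x (f x)) (volume.restrict Ω)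
  mono : ∀ x ∈ Ω, Monotone (φ x)
  zero : ∀ x ∈ Ω, φ x 0 = 0
  lim_zero : ∀ x ∈ Ω, Tendsto (fun t : ℝ≥0 => φ x t) (nhdsWithin 0 (Set.Ioi 0)) (nhds 0)
  lim_top : ∀ x ∈ Ω, Tendsto (fun t : ℝ≥0 => φ x t) atTop (nhds ∞)
  almost_inc : ∃ L : ℝ≥0, 1 ≤ L ∧ ∀ x ∈ Ω, ∀ s t : ℝ≥0, 0 < s → s < t →
    φ x s / (s : ℝ≥0∞) ≤ (L : ℝ≥0∞) * (φ x t / (t : ℝ≥0∞))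

/-- A convex Φ-function on `Ω` (the class `Φ_c(Ω)`): a weak Φ-function which is
additionally convex and left-continuous in `t` for a.e. `x ∈ Ω`. -/
structure IsConvexPhi (Ω : Set (RSp n)) (φ : RSp n → ℝ≥0 → ℝ≥0∞)
    extends IsWeakPhi Ω φ : Prop where
  convex : ∀ᵐ x ∂(volume.restrict Ω), ∀ s t a b : ℝ≥0, a + b = 1 →
    φ x (a * s + b * t) ≤ (a : ℝ≥0∞) * φ x s + (b : ℝ≥0∞) * φ x t
  left_cont : ∀ᵐ x ∂(volume.restrict Ω), ∀ t : ℝ≥0,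
    Tendsto (φ x) (nhdsWithin t (Set.Iio t)) (nhds (φ x t))

/-- A strong Φ-function on `Ω` (the class `Φ_s(Ω)`): a weak Φ-function which is
additionally convex and continuous into `[0,∞]` for a.e. `x ∈ Ω`. -/
structure IsStrongPhi (Ω : Set (RSp n)) (φ : RSp n → ℝ≥0 → ℝ≥0∞)
    extends IsWeakPhi Ω φ : Prop where
  convex : ∀ᵐ x ∂(volume.restrict Ω), ∀ s t a b : ℝ≥0, a + b = 1 →
    φ x (a * s + b * t) ≤ (a : ℝ≥0∞) * φ x s + (b : ℝ≥0∞) * φ x t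
  cont : ∀ᵐ x ∂(volume.restrict Ω), Continuous (φ x)

/-- The generalized (left-)inverse `φ⁻¹(x,t) = inf {τ ≥ 0 : φ(x,τ) ≥ t}`. -/
def phiInv (φ : RSp n → ℝ≥0 → ℝ≥0∞) (x : RSp n) (t : ℝ≥0∞) : ℝ≥0∞ :=
  sInf ((fun s : ℝ≥0 => (s : ℝ≥0∞)) '' {s : ℝ≥0 | t ≤ φ x s})

/-- The condition `(aInc)_p` on `Ω`: `t ↦ φ(x,t)/t^p` is almost increasing, uniformly in `x`. -/
def AInc (p : ℝ) (Ω : Set (RSp n)) (φ : RSp n → ℝ≥0 → ℝ≥0∞) : Prop :=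
  ∃ L : ℝ≥0, 1 ≤ L ∧ ∀ x ∈ Ω, ∀ s t : ℝ≥0, 0 < s → s < t →
    φ x s / (s : ℝ≥0∞) ^ p ≤ (L : ℝ≥0∞) * (φ x t / (t : ℝ≥0∞) ^ p)

/-- The condition `(aDec)_q` on `Ω`: `t ↦ φ(x,t)/t^q` is almost decreasing, uniformly in `x`. -/
def ADec (q : ℝ) (Ω : Set (RSp n)) (φ : RSp n → ℝ≥0 → ℝ≥0∞) : Prop :=
  ∃ L : ℝ≥0, 1 ≤ L ∧ ∀ x ∈ Ω, ∀ s t : ℝ≥0, 0 < s → s < t →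
    φ x t / (t : ℝ≥0∞) ^ q ≤ (L : ℝ≥0∞) * (φ x s / (s : ℝ≥0∞) ^ q)

/-- The condition `(A0)` on `Ω`: `β ≤ φ⁻¹(x,1) ≤ 1/β` for a.e. `x ∈ Ω`. -/
def A0 (Ω : Set (RSp n)) (φ : RSp n → ℝ≥0 → ℝ≥0∞) : Prop :=
  ∃ β : ℝ≥0, 0 < β ∧ β ≤ 1 ∧ ∀ᵐ x ∂(volume.restrict Ω),
    (β : ℝ≥0∞) ≤ phiInv φ x 1 ∧ phiInv φ x 1 ≤ (β : ℝ≥0∞)⁻¹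

/-- The condition `(A1)` (on all of `ℝⁿ`). -/
def A1 (φ : RSp n → ℝ≥0 → ℝ≥0∞) : Prop :=
  ∃ β : ℝ≥0, 0 < β ∧ β < 1 ∧ ∀ Q : Cube n, volume Q.set ≤ 1 →
    ∀ᵐ x ∂(volume.restrict Q.set), ∀ᵐ y ∂(volume.restrict Q.set),
      ∀ t : ℝ≥0∞, 1 ≤ t → t ≤ (volume Q.set)⁻¹ →
        (β : ℝ≥0∞) * phiInv φ x t ≤ phiInv φ y t

/-- The condition `(A2)` (on all of `ℝⁿ`). -/
def A2 (φ : RSp n → ℝ≥0 → ℝ≥0∞) : Prop :=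
  ∃ φi : ℝ≥0 → ℝ≥0∞, IsWeakPhi Set.univ (fun _ : RSp n => φi) ∧
  ∃ h : RSp n → ℝ≥0∞, (∫⁻ x, h x) < ∞ ∧ (∃ M : ℝ≥0, ∀ᵐ x ∂(volume : Measure (RSp n)), h x ≤ M) ∧
  ∃ β : ℝ≥0, 0 < β ∧ β ≤ 1 ∧ ∃ s : ℝ≥0, 0 < s ∧
    ∀ᵐ x ∂(volume : Measure (RSp n)), ∀ t : ℝ≥0,
      (φi t ≤ (s : ℝ≥0∞) → φ x (β * t) ≤ φi t + h x) ∧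
      (φ x t ≤ (s : ℝ≥0∞) → φi (β * t) ≤ φ x t + h x)

/-- Membership in the generalized Orlicz space `L^φ(Ω)`. -/
def MemOrlicz (φ : RSp n → ℝ≥0 → ℝ≥0∞) (Ω : Set (RSp n)) (f : RSp n → ℝ) : Prop :=
  AEMeasurable f (volume.restrict Ω) ∧
  ∃ lam : ℝ≥0, 0 < lam ∧ (∫⁻ x in Ω, φ x (lam * ‖f x‖₊) ∂volume) < ∞

/-- The Luxemburg (quasi)norm of `L^φ(Ω)`. -/
def orliczNorm (φ : RSp n → ℝ≥0 → ℝ≥0∞) (Ω : Set (RSp n)) (f : RSp n → ℝ) : ℝ≥0∞ :=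
  sInf ((fun lam : ℝ≥0 => (lam : ℝ≥0∞)) ''
    {lam : ℝ≥0 | 0 < lam ∧ (∫⁻ x in Ω, φ x (‖f x‖₊ / lam) ∂volume) ≤ 1})

/-- The canonical extension of `φ(x,·)` to `[0,∞]`. -/
def phiE (φ : RSp n → ℝ≥0 → ℝ≥0∞) (x : RSp n) (t : ℝ≥0∞) : ℝ≥0∞ :=
  ⨆ (s : ℝ≥0) (_ : (s : ℝ≥0∞) ≤ t), φ x s

/-- The Luxemburg (quasi)norm for `[0,∞]`-valued functions. -/
def orliczNormE (φ : RSp n → ℝ≥0 → ℝ≥0∞) (Ω : Set (RSp n)) (g : RSp n → ℝ≥0∞) : ℝ≥0∞ :=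
  sInf ((fun lam : ℝ≥0 => (lam : ℝ≥0∞)) ''
    {lam : ℝ≥0 | 0 < lam ∧ (∫⁻ x in Ω, phiE φ x (g x / (lam : ℝ≥0∞)) ∂volume) ≤ 1})

/-- The average `b_Q` of `b` over the cube `Q`. -/
def cubeAvg (Q : Cube n) (b : RSp n → ℝ) : ℝ := ⨍ x in Q.set, b x

/-- The BMO seminorm `‖b‖_*`. -/
def bmoNorm (b : RSp n → ℝ) : ℝ≥0∞ :=
  ⨆ Q : Cube n, (volume Q.set)⁻¹ * ∫⁻ x in Q.set, ‖b x - cubeAvg Q b‖₊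

/-- `b ∈ BMO(ℝⁿ)`. -/
def IsBMO (b : RSp n → ℝ) : Prop := LocallyIntegrable b volume ∧ bmoNorm b < ∞

/-- The non-centred Hardy–Littlewood maximal function (over axes-parallel cubes). -/
def maximal (f : RSp n → ℝ) (x : RSp n) : ℝ≥0∞ :=
  ⨆ (Q : Cube n) (_ : x ∈ Q.set), (volume Q.set)⁻¹ * ∫⁻ y in Q.set, (‖f y‖₊ : ℝ≥0∞) ∂volume

/-- The fractional maximal function `M_α`. -/
def fracMaximal (α : ℝ) (f : RSp n → ℝ) (x : RSp n) : ℝ≥0∞ :=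
  ⨆ (Q : Cube n) (_ : x ∈ Q.set),
    volume Q.set ^ (α / (n : ℝ) - 1) * ∫⁻ y in Q.set, (‖f y‖₊ : ℝ≥0∞) ∂volume

/-- The maximal function restricted to subcubes of `Q₀`. -/
def restMaximal (Q₀ : Cube n) (f : RSp n → ℝ) (x : RSp n) : ℝ≥0∞ :=
  ⨆ (Q : Cube n) (_ : x ∈ Q.set) (_ : Q.set ⊆ Q₀.set),
    (volume Q.set)⁻¹ * ∫⁻ y in Q.set, (‖f y‖₊ : ℝ≥0∞) ∂volume

/-- The fractional maximal function restricted to subcubes of `Q₀`. -/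
def restFracMaximal (α : ℝ) (Q₀ : Cube n) (f : RSp n → ℝ) (x : RSp n) : ℝ≥0∞ :=
  ⨆ (Q : Cube n) (_ : x ∈ Q.set) (_ : Q.set ⊆ Q₀.set),
    volume Q.set ^ (α / (n : ℝ) - 1) * ∫⁻ y in Q.set, (‖f y‖₊ : ℝ≥0∞) ∂volume

/-- The sharp maximal function `M♯`. -/
def sharpMaximal (f : RSp n → ℝ) (x : RSp n) : ℝ≥0∞ :=
  ⨆ (Q : Cube n) (_ : x ∈ Q.set),
    (volume Q.set)⁻¹ * ∫⁻ y in Q.set, (‖f y - ⨍ z in Q.set, f z‖₊ : ℝ≥0∞) ∂volume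

/-- The maximal commutator `M_b`. -/
def maximalComm (b f : RSp n → ℝ) (x : RSp n) : ℝ≥0∞ :=
  ⨆ (Q : Cube n) (_ : x ∈ Q.set),
    (volume Q.set)⁻¹ * ∫⁻ y in Q.set, (‖b x - b y‖₊ : ℝ≥0∞) * (‖f y‖₊ : ℝ≥0∞) ∂volume

/-- The fractional maximal commutator `M_{b,α}`. -/
def fracMaximalComm (α : ℝ) (b f : RSp n → ℝ) (x : RSp n) : ℝ≥0∞ :=
  ⨆ (Q : Cube n) (_ : x ∈ Q.set),
    volume Q.set ^ (α / (n : ℝ) - 1) *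
      ∫⁻ y in Q.set, (‖b x - b y‖₊ : ℝ≥0∞) * (‖f y‖₊ : ℝ≥0∞) ∂volume

/-- The commutator `[M,b]f = M(bf) − b·Mf` of the maximal operator. -/
def maximalCommutator (b f : RSp n → ℝ) (x : RSp n) : ℝ :=
  (maximal (fun y => b y * f y) x).toReal - b x * (maximal f x).toReal

/-- The commutator `[M_α,b]f = M_α(bf) − b·M_α f` of the fractional maximal operator. -/
def fracMaximalCommutator (α : ℝ) (b f : RSp n → ℝ) (x : RSp n) : ℝ :=
  (fracMaximal α (fun y => b y * f y) x).toReal - b x * (fracMaximal α f x).toReal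

/-- The Riesz potential `I_α f`. -/
def riesz (α : ℝ) (f : RSp n → ℝ) (x : RSp n) : ℝ :=
  ∫ y, f y / dist x y ^ ((n : ℝ) - α)

/-- The commutator `[I_α, b]f = I_α(bf) − b·I_α f` of the Riesz potential. -/
def rieszCommutator (α : ℝ) (b f : RSp n → ℝ) (x : RSp n) : ℝ :=
  riesz α (fun y => b y * f y) x - b x * riesz α f x

/-- The operator `I_{b,α} f(x) = ∫ |b(x)−b(y)|·|x−y|^{α−n} f(y) dy`. -/
def rieszAbs (α : ℝ) (b f : RSp n → ℝ) (x : RSp n) : ℝ :=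
  ∫ y, |b x - b y| / dist x y ^ ((n : ℝ) - α) * f y

/-- Equivalence `φ ≃ ψ` of Φ-functions. -/
def PhiEquiv (φ ψ : RSp n → ℝ≥0 → ℝ≥0∞) : Prop :=
  ∃ L : ℝ≥0, 1 ≤ L ∧ ∀ x : RSp n, ∀ t : ℝ≥0, ψ x (t / L) ≤ φ x t ∧ φ x t ≤ ψ x (L * t)

/-- Weak equivalence `φ ∼ ψ` of Φ-functions. -/
def PhiWeakEquiv (φ ψ : RSp n → ℝ≥0 → ℝ≥0∞) : Prop :=
  ∃ L : ℝ≥0, 1 ≤ L ∧ ∃ h : RSp n → ℝ≥0∞, (∫⁻ x, h x) < ∞ ∧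
    ∀ᵐ x ∂(volume : Measure (RSp n)), ∀ t : ℝ≥0,
      ψ x t ≤ φ x (L * t) + h x ∧ φ x t ≤ ψ x (L * t) + h x

/-- The relation `φ⁻¹(x,t) ≈ t^{α/n}·ψ⁻¹(x,t)` with constants independent of `x` and `t > 0`. -/
def FracInvRel (α : ℝ) (φ ψ : RSp n → ℝ≥0 → ℝ≥0∞) : Prop :=
  ∃ c₁ c₂ : ℝ≥0, 0 < c₁ ∧ ∀ x : RSp n, ∀ t : ℝ≥0, 0 < t →
    (c₁ : ℝ≥0∞) * ((t : ℝ≥0∞) ^ (α / (n : ℝ)) * phiInv ψ x t) ≤ phiInv φ x t ∧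
    phiInv φ x t ≤ (c₂ : ℝ≥0∞) * ((t : ℝ≥0∞) ^ (α / (n : ℝ)) * phiInv ψ x t)

/-- The characteristic function of a cube, as a real-valued function. -/
def cubeIndicator (Q : Cube n) : RSp n → ℝ := Q.set.indicator 1

end

/-!
`phiInv φ x` is almost a lower adjoint of `φ x`: monotonicity gives `s ≤ φ⁻¹(x, r)` as soon as
`φ(x, s) < r`, and left lower semicontinuity gives back `φ(x, s) ≤ r` from `s ≤ φ⁻¹(x, r)`.
If `r` exceeds `max (φ₁(x, s)) (φ₂(x, t))`, then `s * t ≤ φ₁⁻¹(x, r) * φ₂⁻¹(x, r) ≤ φ₃⁻¹(x, r)`, so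
`φ₃(x, s * t) ≤ r`; now let `r` decrease to the maximum.
-/

section YoungInequality

variable {n : ℕ} {φ φ₁ φ₂ φ₃ : RSp n → ℝ≥0 → ℝ≥0∞} {x : RSp n} {s t : ℝ≥0} {r : ℝ≥0∞}

theorem phiInv_le_coe (h : r ≤ φ x s) : phiInv φ x r ≤ s :=
  sInf_le (mem_image_of_mem _ h)

theorem coe_le_phiInv_of_lt (hφ : Monotone (φ x)) (h : φ x s < r) : s ≤ phiInv φ x r := by
  refine le_sInf (forall_mem_image.2 fun u hu => ?_)
  exact ENNReal.coe_le_coe.2 (hφ.reflect_lt (h.trans_le hu)).le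

theorem apply_le_of_coe_le_phiInv (hφ : LowerSemicontinuousWithinAt (φ x) (Iio s) s)
    (hs : 0 < s) (h : s ≤ phiInv φ x r) : φ x s ≤ r := by
  by_contra! hr
  have : (nhdsWithin s (Iio s)).NeBot := nhdsLT_neBot_of_exists_lt ⟨0, hs⟩
  obtain ⟨u, hru, hus⟩ := ((hφ r hr).and self_mem_nhdsWithin).exists
  have hsu : s ≤ u := ENNReal.coe_le_coe.1 (h.trans (phiInv_le_coe hru.le))
  exact hsu.not_gt hus

theorem apply_mul_le_max_of_phiInv_mul_le (h₁ : Monotone (φ₁ x)) (h₂ : Monotone (φ₂ x))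
    (h₃ : LowerSemicontinuousWithinAt (φ₃ x) (Iio (s * t)) (s * t))
    (hinv : ∀ r : ℝ≥0, phiInv φ₁ x r * phiInv φ₂ x r ≤ phiInv φ₃ x r)
    (hs : 0 < s) (ht : 0 < t) : φ₃ x (s * t) ≤ max (φ₁ x s) (φ₂ x t) := by
  refine ENNReal.le_of_forall_nnreal_lt fun r hr => ?_
  by_contra! hmax
  obtain ⟨hs_lt, ht_lt⟩ := max_lt_iff.1 hmax
  have hmul : ((s * t : ℝ≥0) : ℝ≥0∞) ≤ phiInv φ₃ x r := calc
    ((s * t : ℝ≥0) : ℝ≥0∞) = s * t := ENNReal.coe_mul s t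
    _ ≤ phiInv φ₁ x r * phiInv φ₂ x r :=
      mul_le_mul' (coe_le_phiInv_of_lt h₁ hs_lt) (coe_le_phiInv_of_lt h₂ ht_lt)
    _ ≤ phiInv φ₃ x r := hinv r
  exact (apply_le_of_coe_le_phiInv h₃ (mul_pos hs ht) hmul).not_gt hr

theorem statement0_general {μ : Measure (RSp n)}
    (h₁ : ∀ᵐ x ∂μ, Monotone (φ₁ x)) (h₂ : ∀ᵐ x ∂μ, Monotone (φ₂ x))
    (h₃ : ∀ᵐ x ∂μ, ∀ t, LowerSemicontinuousWithinAt (φ₃ x) (Iio t) t)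
    (hinv : ∀ᵐ x ∂μ, ∀ t : ℝ≥0, phiInv φ₁ x t * phiInv φ₂ x t ≤ phiInv φ₃ x t) :
    ∀ᵐ x ∂μ, ∀ s t : ℝ≥0, 0 < s → 0 < t →
      φ₃ x (s * t) ≤ max (φ₁ x s) (φ₂ x t) ∧
      max (φ₁ x s) (φ₂ x t) ≤ φ₁ x s + φ₂ x t := by
  filter_upwards [h₁, h₂, h₃, hinv] with x h₁x h₂x h₃x hinvx s t hs ht
  exact ⟨apply_mul_le_max_of_phiInv_mul_le h₁x h₂x (h₃x (s * t)) hinvx hs ht,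
    max_le_add_of_nonneg zero_le zero_le⟩

end YoungInequality

theorem IsWeakPhi.ae_monotone {n : ℕ} {Ω : Set (RSp n)} {φ : RSp n → ℝ≥0 → ℝ≥0∞}
    (hφ : IsWeakPhi Ω φ) (hΩ : MeasurableSet Ω) :
    ∀ᵐ x ∂(volume.restrict Ω), Monotone (φ x) :=
  (ae_restrict_mem hΩ).mono hφ.mono

theorem IsConvexPhi.ae_lowerSemicontinuousWithinAt_Iio {n : ℕ} {Ω : Set (RSp n)}
    {φ : RSp n → ℝ≥0 → ℝ≥0∞} (hφ : IsConvexPhi Ω φ) :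
    ∀ᵐ x ∂(volume.restrict Ω), ∀ t, LowerSemicontinuousWithinAt (φ x) (Iio t) t :=
  hφ.left_cont.mono fun _ hx t => ContinuousWithinAt.lowerSemicontinuousWithinAt (hx t)

/-- Young-type inequality from the inverse inequality,
for convex Φ-functions. -/
theorem statement0 {n : ℕ} (Ω : Set (RSp n)) (hΩ : IsOpen Ω)
    (φ₁ φ₂ φ₃ : RSp n → ℝ≥0 → ℝ≥0∞)
    (h₁ : IsConvexPhi Ω φ₁) (h₂ : IsConvexPhi Ω φ₂) (h₃ : IsConvexPhi Ω φ₃)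
    (hinv : ∀ᵐ x ∂(volume.restrict Ω), ∀ t : ℝ≥0,
      phiInv φ₁ x t * phiInv φ₂ x t ≤ phiInv φ₃ x t) :
    ∀ᵐ x ∂(volume.restrict Ω), ∀ s t : ℝ≥0, 0 < s → 0 < t →
      φ₃ x (s * t) ≤ max (φ₁ x s) (φ₂ x t) ∧
      max (φ₁ x s) (φ₂ x t) ≤ φ₁ x s + φ₂ x t := by
  exact statement0_general (h₁.ae_monotone hΩ.measurableSet) (h₂.ae_monotone hΩ.measurableSet)
    h₃.ae_lowerSemicontinuousWithinAt_Iio hinv
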